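/- Let k ∈ {7, 8, 10, 11, 12, 13} and let a be a positive integer with k·a² + 4 = r² a perfect square. Set b = ka and let c be one of c₁⁺ = a + b + 2r, c₂⁺ = (ab+4)(a+b+2r) − 4r, c₂⁻ = (ab+4)(a+b−2r) + 4r; let s, t be the positive integers with ac + 4 = s² and bc + 4 = t². If the equation P_l = Q_m has a solution (l, m) of Type 1 with m ≥ 3, then 0 < Λ < 2.6·β^{−2m}; if it has a solution (l, m) of Type 2 with m ≥ 3, then 0 < Λ < 1.5·a²·β^{−2m}. -/

import Mathlib

/-!
Twice `P l` is a dominant term `p` plus `U / p`, where `U = 4 * (1 - a / b)`, because `p` and its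
conjugate multiply to `U`. Likewise twice `Q m` is `q + V / q` with `V = 4 * (1 - a / c)`, and
`Λ = log (p / q)`. So `P l = Q m` reads `p + U / p = q + V / q`; as `U < V`, this forces `q < p`,
and `log (p / q) < p / q - 1 = (V - U * (q / p)) / q ^ 2`. For `x₀ = 2` the crude bound
`V / q ^ 2` suffices; for `x₀ = r` the leading coefficient of `q` may be as small as about `2 / r`,
and one has to exploit the cancellation in `V - U`.
-/

theorem eq_add_pow_of_recurrence {R : Type*} [CommRing R] {u : ℕ → R} {d e α β A B : R}
    (hα : α ^ 2 = d * α + e) (hβ : β ^ 2 = d * β + e) (h0 : u 0 = A + B)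
    (h1 : u 1 = A * α + B * β) (hu : ∀ i, u (i + 2) = d * u (i + 1) + e * u i) (i : ℕ) :
    u i = A * α ^ i + B * β ^ i := by
  induction i using Nat.twoStepInduction with
  | zero => simp [h0]
  | one => simp [h1]
  | more n ih ih' =>
    rw [hu, ih, ih']
    linear_combination -A * α ^ n * hα - B * β ^ n * hβ

section AddDiv

variable {p q U V : ℝ}

theorem lt_of_add_div_eq_add_div (hp : 0 < p) (hq : 0 < q) (hUV : U < V) (hU : U ≤ p * q)
    (h : p + U / p = q + V / q) : q < p := by
  have factored : (p - q) * (p * q - U) = p * (V - U) := by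
    field_simp at h
    linear_combination h
  have : 0 < (p - q) * (p * q - U) := factored ▸ mul_pos hp (sub_pos.2 hUV)
  exact sub_pos.1 (pos_of_mul_pos_left this (sub_nonneg.2 hU))

theorem log_div_lt_of_add_div_eq (hq : 0 < q) (hqp : q < p) (h : p + U / p = q + V / q) :
    Real.log (p / q) < (V - U * (q / p)) / q ^ 2 := by
  have hp : 0 < p := hq.trans hqp
  calc Real.log (p / q) < p / q - 1 :=
        Real.log_lt_sub_one_of_pos (div_pos hp hq) ((one_lt_div hq).2 hqp).ne'
    _ = (V - U * (q / p)) / q ^ 2 := by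
        field_simp at h ⊢
        linear_combination h

theorem log_div_lt_div_sq (hq : 0 < q) (hqp : q < p) (hU : 0 ≤ U) (h : p + U / p = q + V / q) :
    Real.log (p / q) < V / q ^ 2 := by
  refine (log_div_lt_of_add_div_eq hq hqp h).trans_le ?_
  have : 0 ≤ U * (q / p) := mul_nonneg hU (div_pos hq (hq.trans hqp)).le
  gcongr
  linarith

theorem log_div_lt_sub_add_div_sq (hq : 0 < q) (hqp : q < p) (hU : 0 ≤ U)
    (h : p + U / p = q + V / q) :
    Real.log (p / q) < (V - U + U * V / q ^ 2) / q ^ 2 := by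
  refine (log_div_lt_of_add_div_eq hq hqp h).trans_le ?_
  have hp : 0 < p := hq.trans hqp
  have gap : p - q ≤ V / q := by
    have : 0 ≤ U / p := div_nonneg hU hp.le
    linarith
  have relative_gap : 1 - q / p ≤ V / q ^ 2 :=
    calc 1 - q / p = (p - q) / p := by field_simp
      _ ≤ (p - q) / q := div_le_div_of_nonneg_left (sub_nonneg.2 hqp.le) hq hqp.le
      _ ≤ V / q / q := by gcongr
      _ = V / q ^ 2 := by rw [div_div, sq]
  have : U * (1 - q / p) ≤ U * V / q ^ 2 := by
    rw [mul_div_assoc]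
    gcongr
  gcongr
  linarith

end AddDiv

/-- The sequences `P` and `Q` attached to a D(4)-pair `{a, b}` with `a * b + 4 = r ^ 2`, over the
reals: `P` is the sequence of `X`-components of the solutions of
`a * Y ^ 2 - b * X ^ 2 = 4 * (a - b)` generated by the solution `(x, y)`. -/
structure IsPellSeq (a b r x y : ℝ) (P : ℕ → ℝ) : Prop where
  pell : a * y ^ 2 - b * x ^ 2 = 4 * (a - b)
  zero : P 0 = x
  one : 2 * P 1 = r * x + a * y
  add_two : ∀ i, P (i + 2) = r * P (i + 1) - P i

/-- The characteristic root `(r + √(ab)) / 2` of `IsPellSeq`: it is `α` for the pair `{a, b}`, and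
`β` for the pair `{a, c}`. -/
noncomputable def pellUnit (a b r : ℝ) : ℝ := (r + √(a * b)) / 2

/-- The coefficient of `pellUnit a b r ^ i` in twice the `i`-th term of a sequence `IsPellSeq`. The
number `γ` is the quotient of two such coefficients. -/
noncomputable def pellCoeff (a b x y : ℝ) : ℝ := x + y * √(a / b)

/-- The dominant part of twice the `i`-th term of a sequence `IsPellSeq`. -/
noncomputable def pellDominant (a b r x y : ℝ) (i : ℕ) : ℝ :=
  pellCoeff a b x y * pellUnit a b r ^ i

section Pell

variable {a b c r s x y w z : ℝ}

theorem pellUnit_mul_conj (hab : 0 ≤ a * b) (hr : a * b + 4 = r ^ 2) :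
    pellUnit a b r * ((r - √(a * b)) / 2) = 1 := by
  unfold pellUnit
  linear_combination (-1 / 4) * Real.sq_sqrt hab - (1 / 4) * hr

theorem sub_half_le_pellUnit (hr : 5 / 2 ≤ r) (hab : a * b + 4 = r ^ 2) :
    r - 1 / 2 ≤ pellUnit a b r := by
  have : r - 1 ≤ √(a * b) := Real.le_sqrt_of_sq_le (by linarith)
  unfold pellUnit
  linarith

theorem pellCoeff_eq_div (ha : 0 ≤ a) (hb : 0 < b) :
    pellCoeff a b x y = (y * √a + x * √b) / √b := by
  have : √b ≠ 0 := (Real.sqrt_pos.2 hb).ne'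
  rw [pellCoeff, Real.sqrt_div ha]
  field_simp
  ring

theorem pellCoeff_div_pellCoeff (ha : 0 ≤ a) (hb : 0 < b) (hc : 0 < c) :
    pellCoeff a b x y / pellCoeff a c w z =
      (√c * (y * √a + x * √b)) / (√b * (z * √a + w * √c)) := by
  rw [pellCoeff_eq_div ha hb, pellCoeff_eq_div ha hc, div_div_div_eq, mul_comm √c]

theorem pellCoeff_mul_conj (ha : 0 ≤ a) (hb : 0 < b)
    (hxy : a * y ^ 2 - b * x ^ 2 = 4 * (a - b)) :
    pellCoeff a b x y * pellCoeff a b x (-y) = 4 * (1 - a / b) := by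
  have : √(a / b) ^ 2 = a / b := Real.sq_sqrt (div_nonneg ha hb.le)
  calc pellCoeff a b x y * pellCoeff a b x (-y) = x ^ 2 - y ^ 2 * (a / b) := by
        unfold pellCoeff
        linear_combination (-y ^ 2) * this
    _ = 4 * (1 - a / b) := by
        field_simp
        linear_combination -hxy

-- The two conjugates have a positive sum `2 * x` and a positive product, so both lie below `2 * x`.
theorem div_le_pellCoeff (ha : 0 ≤ a) (hab : a < b) (hx : 0 < x)
    (hxy : a * y ^ 2 - b * x ^ 2 = 4 * (a - b)) :
    2 * (1 - a / b) / x ≤ pellCoeff a b x y := by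
  have hb : 0 < b := ha.trans_lt hab
  have sum_eq : pellCoeff a b x y + pellCoeff a b x (-y) = 2 * x := by
    unfold pellCoeff
    ring
  have prod_eq := pellCoeff_mul_conj ha hb hxy
  have prod_pos : 0 < pellCoeff a b x y * pellCoeff a b x (-y) := by
    rw [prod_eq]
    linarith [(div_lt_one hb).2 hab]
  have pos : 0 < pellCoeff a b x y ∧ 0 < pellCoeff a b x (-y) := by
    rcases pos_and_pos_or_neg_and_neg_of_mul_pos prod_pos with pos | neg
    · exact pos
    · linarith [neg.1, neg.2]
  rw [div_le_iff₀ hx]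
  nlinarith [pos.1]

theorem two_mul_one_sub_sqrt_le_pellCoeff (hy : y ^ 2 = 4) :
    2 * (1 - √(a / b)) ≤ pellCoeff a b 2 y := by
  have : -2 ≤ y := (abs_le_of_sq_le_sq' (by linarith) zero_le_two).1
  unfold pellCoeff
  nlinarith [Real.sqrt_nonneg (a / b)]

theorem sqrt_mul_mul_sqrt_div (ha : 0 ≤ a) (hb : 0 < b) : √(a * b) * √(a / b) = a := by
  have : a * b * (a / b) = a * a := by field_simp
  rw [← Real.sqrt_mul (by positivity), this, Real.sqrt_mul_self ha]

theorem pellDominant_pos (hr : 0 < r) (hxy : 0 < pellCoeff a b x y) (i : ℕ) :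
    0 < pellDominant a b r x y i := by
  unfold pellDominant pellUnit
  positivity

theorem log_pellDominant_div (hr : 0 < r) (hs : 0 < s) (hxy : 0 < pellCoeff a b x y)
    (hwz : 0 < pellCoeff a c w z) (l m : ℕ) :
    Real.log (pellDominant a b r x y l / pellDominant a c s w z m) =
      l * Real.log (pellUnit a b r) - m * Real.log (pellUnit a c s) +
        Real.log (pellCoeff a b x y / pellCoeff a c w z) := by
  have hα : 0 < pellUnit a b r := by
    unfold pellUnit
    positivity
  have hβ : 0 < pellUnit a c s := by
    unfold pellUnit
    positivity
  rw [Real.log_div (pellDominant_pos hr hxy l).ne' (pellDominant_pos hs hwz m).ne',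
    pellDominant, pellDominant, Real.log_mul hxy.ne' (pow_pos hα l).ne',
    Real.log_mul hwz.ne' (pow_pos hβ m).ne', Real.log_pow, Real.log_pow,
    Real.log_div hxy.ne' hwz.ne']
  ring

theorem div_pellDominant_sq (N : ℝ) (m : ℕ) :
    N / pellDominant a b r x y m ^ 2 = N / pellCoeff a b x y ^ 2 / pellUnit a b r ^ (2 * m) := by
  rw [pellDominant, mul_pow, div_div, ← pow_mul, mul_comm m 2]

namespace IsPellSeq

variable {P Q : ℕ → ℝ}

theorem two_mul_eq (hP : IsPellSeq a b r x y P) (ha : 0 ≤ a) (hb : 0 < b)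
    (hr : a * b + 4 = r ^ 2) (i : ℕ) :
    2 * P i = pellCoeff a b x y * pellUnit a b r ^ i +
      pellCoeff a b x (-y) * ((r - √(a * b)) / 2) ^ i := by
  have sq_eq : √(a * b) ^ 2 = a * b := Real.sq_sqrt (by positivity)
  have hδ := sqrt_mul_mul_sqrt_div ha hb
  refine eq_add_pow_of_recurrence (u := fun i ↦ 2 * P i) (d := r) (e := -1) ?_ ?_ ?_ ?_ ?_ i
  · unfold pellUnit
    linear_combination (1 / 4) * sq_eq + (1 / 4) * hr
  · linear_combination (1 / 4) * sq_eq + (1 / 4) * hr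
  · unfold pellCoeff
    linear_combination 2 * hP.zero
  · unfold pellCoeff pellUnit
    linear_combination hP.one - y * hδ
  · intro j
    linear_combination 2 * hP.add_two j

theorem two_mul_eq_pellDominant_add_div (hP : IsPellSeq a b r x y P) (ha : 0 ≤ a) (hb : 0 < b)
    (hr : a * b + 4 = r ^ 2) (hxy : pellCoeff a b x y ≠ 0) (i : ℕ) :
    2 * P i = pellDominant a b r x y i + 4 * (1 - a / b) / pellDominant a b r x y i := by
  have conj_eq : (r - √(a * b)) / 2 = (pellUnit a b r)⁻¹ :=
    eq_inv_of_mul_eq_one_right (pellUnit_mul_conj (by positivity) hr)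
  rw [hP.two_mul_eq ha hb hr, ← pellCoeff_mul_conj ha hb hP.pell, conj_eq, inv_pow, pellDominant,
    mul_div_mul_left _ _ hxy, div_eq_mul_inv]

theorem sq_eq_four (hP : IsPellSeq a b r 2 y P) (ha : a ≠ 0) : y ^ 2 = 4 :=
  mul_left_cancel₀ ha (by linear_combination hP.pell)

theorem pellCoeff_pos (hP : IsPellSeq a b r x y P) (ha : 0 ≤ a) (hab : a < b) (hx : 0 < x) :
    0 < pellCoeff a b x y := by
  refine lt_of_lt_of_le ?_ (div_le_pellCoeff ha hab hx hP.pell)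
  have : a / b < 1 := (div_lt_one (ha.trans_lt hab)).2 hab
  exact div_pos (by linarith) hx

theorem pellDominant_add_div_eq (hP : IsPellSeq a b r x y P) (hQ : IsPellSeq a c s w z Q)
    (ha : 0 ≤ a) (hb : 0 < b) (hc : 0 < c) (hr : a * b + 4 = r ^ 2) (hs : a * c + 4 = s ^ 2)
    (hxy : pellCoeff a b x y ≠ 0) (hwz : pellCoeff a c w z ≠ 0) {l m : ℕ} (hPQ : P l = Q m) :
    pellDominant a b r x y l + 4 * (1 - a / b) / pellDominant a b r x y l =
      pellDominant a c s w z m + 4 * (1 - a / c) / pellDominant a c s w z m := by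
  rw [← hP.two_mul_eq_pellDominant_add_div ha hb hr hxy,
    ← hQ.two_mul_eq_pellDominant_add_div ha hc hs hwz, hPQ]

end IsPellSeq

end Pell

section Estimates

variable {a b c r s x y z : ℝ}

theorem twentyFive_mul_le_of_add_add_le (ha : 0 ≤ a) (hr : 0 ≤ r) (hab : a * b + 4 = r ^ 2)
    (hba : 9 * a ≤ 4 * b) (hc : a + b + 2 * r ≤ c) : 25 * a ≤ 4 * c := by
  have : 3 * a ≤ 2 * r := abs_le_of_sq_le_sq' (by nlinarith) (by positivity) |>.2
  linarith

theorem add_le_of_add_add_le (ha : 0 ≤ a) (hab : a * b + 4 = r ^ 2) (hc : a + b + 2 * r ≤ c)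
    (hs : 0 ≤ s) (hac : a * c + 4 = s ^ 2) : a + r ≤ s :=
  abs_le_of_sq_le_sq' (by nlinarith) hs |>.2

theorem le_pellUnit_of_add_add_le (ha : 1 ≤ a) (hr : 2 ≤ r) (hab : a * b + 4 = r ^ 2)
    (hc : a + b + 2 * r ≤ c) (hs : 0 ≤ s) (hac : a * c + 4 = s ^ 2) : r ≤ pellUnit a c s := by
  have : a + r ≤ s := add_le_of_add_add_le (by linarith) hab hc hs hac
  linarith [sub_half_le_pellUnit (by linarith) hac]

theorem mul_sq_le_pellDominant (ha : 0 ≤ a) (hac : a < c) (hx : 0 < x) (hxr : x ≤ r)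
    (hxz : a * z ^ 2 - c * x ^ 2 = 4 * (a - c)) (hr : 1 ≤ r) (hβ : r ≤ pellUnit a c s) {m : ℕ}
    (hm : 3 ≤ m) : 2 * (1 - a / c) * r ^ 2 ≤ pellDominant a c s x z m := by
  have one_sub_pos : 0 < 1 - a / c := sub_pos.2 ((div_lt_one (ha.trans_lt hac)).2 hac)
  have pow_le : r ^ 3 ≤ pellUnit a c s ^ m :=
    (pow_le_pow_right₀ hr hm).trans (pow_le_pow_left₀ (by linarith) hβ m)
  have hβ0 : 0 ≤ pellUnit a c s := by linarith
  calc 2 * (1 - a / c) * r ^ 2 = 2 * (1 - a / c) / r * r ^ 3 := by field_simp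
    _ ≤ 2 * (1 - a / c) / x * pellUnit a c s ^ m := by gcongr
    _ ≤ pellDominant a c s x z m :=
      mul_le_mul_of_nonneg_right (div_le_pellCoeff ha hac hx hxz) (by positivity)

theorem one_sub_div_le_pellDominant (ha : 0 ≤ a) (hab : a < b) (hr : 2 ≤ r)
    (hy : a * y ^ 2 - b * 2 ^ 2 = 4 * (a - b)) (l : ℕ) :
    1 - a / b ≤ pellDominant a b r 2 y l := by
  have coeff_ge := div_le_pellCoeff ha hab two_pos hy
  have : a / b < 1 := (div_lt_one (ha.trans_lt hab)).2 hab
  have : 1 ≤ pellUnit a b r := by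
    unfold pellUnit
    linarith [Real.sqrt_nonneg (a * b)]
  calc 1 - a / b ≤ pellCoeff a b 2 y := by linarith
    _ ≤ pellDominant a b r 2 y l :=
      le_mul_of_one_le_right (by linarith) (one_le_pow₀ this)

theorem four_le_of_mul_sq_le (hc : 0 < c) (hac : 2 * a ≤ c) (hr : 2 ≤ r) {q : ℝ}
    (hq : 2 * (1 - a / c) * r ^ 2 ≤ q) : 4 ≤ q := by
  have : a / c ≤ 1 / 2 := by
    rw [div_le_div_iff₀ hc two_pos]
    linarith
  nlinarith

theorem IsPellSeq.pellDominant_lt_pellDominant {P Q : ℕ → ℝ} (hP : IsPellSeq a b r 2 y P)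
    (hQ : IsPellSeq a c s x z Q) (ha : 0 < a) (hab : a < b) (hbc : b < c) (hr : 2 ≤ r)
    (hr2 : a * b + 4 = r ^ 2) (hs2 : a * c + 4 = s ^ 2) (hx : 0 < x) {l m : ℕ}
    (hq : 4 ≤ pellDominant a c s x z m) (hPQ : P l = Q m) :
    pellDominant a c s x z m < pellDominant a b r 2 y l := by
  have hb : 0 < b := ha.trans hab
  have hc : 0 < c := hb.trans hbc
  have coeffP_pos := hP.pellCoeff_pos ha.le hab two_pos
  have coeffQ_pos := hQ.pellCoeff_pos ha.le (hab.trans hbc) hx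
  have p_ge := one_sub_div_le_pellDominant ha.le hab hr hP.pell l
  have p_pos := pellDominant_pos (i := l) (zero_lt_two.trans_le hr) coeffP_pos
  refine lt_of_add_div_eq_add_div p_pos (by linarith) ?_ ?_
    (hP.pellDominant_add_div_eq hQ ha.le hb hc hr2 hs2 coeffP_pos.ne' coeffQ_pos.ne' hPQ)
  · linarith [div_lt_div_of_pos_left ha hb hbc]
  · calc 4 * (1 - a / b) ≤ 4 * pellDominant a b r 2 y l := by gcongr
      _ ≤ pellDominant a b r 2 y l * pellDominant a c s x z m := by
        rw [mul_comm]
        gcongr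

theorem div_pellCoeff_two_sq_le (ha : 0 ≤ a) (hc : 0 < c) (hac : 25 * a ≤ 4 * c)
    (hz : z ^ 2 = 4) : 4 * (1 - a / c) / pellCoeff a c 2 z ^ 2 ≤ 2.6 := by
  have coeff_ge := two_mul_one_sub_sqrt_le_pellCoeff (a := a) (b := c) hz
  have sq_eq : √(a / c) ^ 2 = a / c := Real.sq_sqrt (by positivity)
  have sqrt_le : √(a / c) ≤ 2 / 5 := by
    rw [Real.sqrt_le_left (by norm_num), div_le_iff₀ hc]
    linarith
  have sq_ge : (2 * (1 - √(a / c))) ^ 2 ≤ pellCoeff a c 2 z ^ 2 :=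
    pow_le_pow_left₀ (by linarith) coeff_ge 2
  rw [div_le_iff₀ (pow_pos (by linarith) 2), ← sq_eq]
  nlinarith

theorem four_mul_mul_four_mul_div_sq_le (ha : 1 ≤ a) (hb : 0 < b) (hac : 2 * a ≤ c) (hr : 4 ≤ r)
    (hr2 : a * b + 4 = r ^ 2) {q : ℝ} (hq : 2 * (1 - a / c) * r ^ 2 ≤ q) :
    4 * (1 - a / b) * (4 * (1 - a / c)) / q ^ 2 ≤ a / b / 2 := by
  have div_le_half : a / c ≤ 1 / 2 := by
    rw [div_le_div_iff₀ (by linarith) two_pos]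
    linarith
  have one_sub_pos : 0 < 1 - a / c := by linarith
  have pow_four_ge : 16 * (a * b) ≤ r ^ 4 := by
    have : 16 ≤ r ^ 2 := by nlinarith
    nlinarith
  calc 4 * (1 - a / b) * (4 * (1 - a / c)) / q ^ 2
      ≤ 4 * 1 * (4 * (1 - a / c)) / (2 * (1 - a / c) * r ^ 2) ^ 2 := by
        gcongr
        exact sub_le_self _ (by positivity)
    _ = 4 / ((1 - a / c) * r ^ 4) := by
        field_simp
        ring
    _ ≤ 4 / (1 / 2 * (16 * (a * b))) := by
        gcongr
        linarith
    _ = 1 / (a * b) / 2 := by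
        field_simp
        ring
    _ ≤ a / b / 2 := by
        gcongr ?_ / 2
        rw [div_le_div_iff₀ (by positivity) hb, ← mul_assoc]
        gcongr
        exact one_le_mul_of_one_le_of_one_le ha ha

theorem three_mul_sq_mul_div_le (ha : 0 < a) (hb : 0 < b) (hac : a / c ≤ 1) (hr : 4 ≤ r)
    (hr2 : a * b + 4 = r ^ 2) {F : ℝ} (hF : 2 * (1 - a / c) / r ≤ F) :
    3 * (1 - a / c) ^ 2 * (a / b) ≤ a ^ 2 * F ^ 2 := by
  have sq_le : 3 * r ^ 2 ≤ 4 * (a * b) := by nlinarith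
  calc 3 * (1 - a / c) ^ 2 * (a / b) = a ^ 2 * (1 - a / c) ^ 2 * (3 / (a * b)) := by field_simp
    _ ≤ a ^ 2 * (1 - a / c) ^ 2 * (4 / r ^ 2) := by
        gcongr _ * ?_
        rwa [div_le_div_iff₀ (by positivity) (by positivity)]
    _ = a ^ 2 * (2 * (1 - a / c) / r) ^ 2 := by ring
    _ ≤ a ^ 2 * F ^ 2 := by gcongr

theorem sub_add_div_sq_div_sq_le (ha : 1 ≤ a) (hba : 9 * a ≤ 4 * b) (hac : 2 * a ≤ c) (hr : 4 ≤ r)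
    (hr2 : a * b + 4 = r ^ 2) {F q : ℝ} (hF0 : 0 < F) (hF : 2 * (1 - a / c) / r ≤ F)
    (hq : 2 * (1 - a / c) * r ^ 2 ≤ q) :
    (4 * (1 - a / c) - 4 * (1 - a / b) + 4 * (1 - a / b) * (4 * (1 - a / c)) / q ^ 2) / F ^ 2 ≤
      1.5 * a ^ 2 := by
  have hb : 0 < b := by linarith
  have hc : 0 < c := by linarith
  have div_b_le : a / b ≤ 4 / 9 := by
    rw [div_le_div_iff₀ hb (by norm_num)]
    linarith
  have correction_le := four_mul_mul_four_mul_div_sq_le ha hb hac hr hr2 hq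
  have coeff_ge := three_mul_sq_mul_div_le (by linarith) hb
    ((div_le_one hc).2 (by linarith)) hr hr2 hF
  -- `1.5 * 3 = 4 + 1 / 2`: the leading difference and the correction exhaust the constant `1.5`.
  have main : 4 * (a / b) - 4 * (a / c) + a / b / 2 ≤ 1.5 * (3 * (1 - a / c) ^ 2 * (a / b)) := by
    have : 0 ≤ a / c * (4 - 9 * (a / b)) := mul_nonneg (by positivity) (by linarith)
    have : 0 ≤ (a / c) ^ 2 * (a / b) := by positivity
    linarith
  rw [div_le_iff₀ (by positivity)]
  linarith

end Estimates

theorem linear_form_bound_c1_plus_c2_general {a b c r s x y z : ℝ} (ha : 1 ≤ a) (hr : 4 ≤ r)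
    (hab : a * b + 4 = r ^ 2) (hba : 9 * a ≤ 4 * b) (hc : a + b + 2 * r ≤ c)
    (hs : 0 < s) (hac : a * c + 4 = s ^ 2) (hx : 0 < x) (hxr : x ≤ r) {P Q : ℕ → ℝ}
    (hP : IsPellSeq a b r 2 y P) (hQ : IsPellSeq a c s x z Q) {l m : ℕ} (hm : 3 ≤ m)
    (hPQ : P l = Q m) {α β γ Λ : ℝ} (hα : α = (r + √(a * b)) / 2) (hβ : β = (s + √(a * c)) / 2)
    (hγ : γ = (√c * (y * √a + 2 * √b)) / (√b * (z * √a + x * √c)))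
    (hΛ : Λ = l * Real.log α - m * Real.log β + Real.log γ) :
    0 < Λ ∧ Λ < 1.5 * a ^ 2 / β ^ (2 * m) ∧ (x = 2 → Λ < 2.6 / β ^ (2 * m)) := by
  obtain rfl : α = pellUnit a b r := hα
  obtain rfl : β = pellUnit a c s := hβ
  have ha0 : 0 < a := by linarith
  have hab' : a < b := by linarith
  have hac' : a < c := by linarith
  have hca : 25 * a ≤ 4 * c := twentyFive_mul_le_of_add_add_le ha0.le (by linarith) hab hba hc
  have r_le_β : r ≤ pellUnit a c s := le_pellUnit_of_add_add_le ha (by linarith) hab hc hs.le hac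
  have β_pos : 0 < pellUnit a c s := by linarith
  have coeffP_pos := hP.pellCoeff_pos ha0.le hab' two_pos
  have coeffQ_pos := hQ.pellCoeff_pos ha0.le hac' hx
  have q_ge := mul_sq_le_pellDominant ha0.le hac' hx hxr hQ.pell (by linarith) r_le_β hm
  have q_pos := pellDominant_pos hs coeffQ_pos m
  have q_lt_p := hP.pellDominant_lt_pellDominant hQ ha0 hab' (by linarith) (by linarith) hab hac hx
    (four_le_of_mul_sq_le (by linarith) (by linarith) (by linarith) q_ge) hPQ
  have U_nonneg : 0 ≤ 4 * (1 - a / b) := by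
    linarith [(div_lt_one (ha0.trans hab')).2 hab']
  have eqn := hP.pellDominant_add_div_eq hQ ha0.le (ha0.trans hab') (ha0.trans hac') hab hac
    coeffP_pos.ne' coeffQ_pos.ne' hPQ
  rw [hΛ, hγ, ← pellCoeff_div_pellCoeff ha0.le (ha0.trans hab') (ha0.trans hac'),
    ← log_pellDominant_div (by linarith) hs coeffP_pos coeffQ_pos]
  refine ⟨Real.log_pos ((one_lt_div q_pos).2 q_lt_p), ?_, ?_⟩
  · refine (log_div_lt_sub_add_div_sq q_pos q_lt_p U_nonneg eqn).trans_le ?_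
    rw [div_pellDominant_sq]
    gcongr
    refine sub_add_div_sq_div_sq_le ha hba (by linarith) hr hab coeffQ_pos ?_ q_ge
    refine le_trans ?_ (div_le_pellCoeff ha0.le hac' hx hQ.pell)
    gcongr
    linarith [(div_lt_one (ha0.trans hac')).2 hac']
  · rintro rfl
    refine (log_div_lt_div_sq q_pos q_lt_p U_nonneg eqn).trans_le ?_
    rw [div_pellDominant_sq]
    gcongr
    exact div_pellCoeff_two_sq_le ha0.le (ha0.trans hac') hca (hQ.sq_eq_four ha0.ne')

section Integers

variable {a b c r : ℤ}

theorem seven_mul_le_of_mem {k : ℤ} (hk : k ∈ ({7, 8, 10, 11, 12, 13} : Set ℤ)) (ha : 0 ≤ a) :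
    7 * a ≤ k * a := by
  simp only [Set.mem_insert_iff, Set.mem_singleton_iff] at hk
  gcongr
  omega

theorem four_le_of_mul_add_four_eq_sq (ha : 0 < a) (hr : 0 < r) (hba : 7 * a ≤ b)
    (hab : a * b + 4 = r ^ 2) : 4 ≤ r := by
  by_contra! hr4
  nlinarith

theorem add_add_le_of_eq_c1_or_c2 (ha : 0 < a) (hr : 4 ≤ r) (hba : 7 * a ≤ b)
    (hab : a * b + 4 = r ^ 2)
    (hc : c = a + b + 2 * r ∨ c = (a * b + 4) * (a + b + 2 * r) - 4 * r ∨
      c = (a * b + 4) * (a + b - 2 * r) + 4 * r) : a + b + 2 * r ≤ c := by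
  have hb : 0 < b := by linarith
  have sq_ge : 16 ≤ r ^ 2 := by nlinarith
  rcases hc with rfl | rfl | rfl
  · exact le_rfl
  · rw [hab]
    nlinarith
  · have : 2 * r ≤ b := (abs_le_of_sq_le_sq' (by nlinarith) hb.le).2
    have : (a * b + 4) * a ≤ (a * b + 4) * (a + b - 2 * r) := by
      gcongr
      linarith
    have : b ≤ a ^ 2 * b := le_mul_of_one_le_left hb.le (by nlinarith)
    nlinarith

theorem isPellSeq_intCast {x y : ℤ} {P : ℕ → ℤ} (hxy : a * y ^ 2 - b * x ^ 2 = 4 * (a - b))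
    (h0 : P 0 = x) (h1 : 2 * P 1 = r * x + a * y)
    (hP : ∀ i, P (i + 2) = r * P (i + 1) - P i) :
    IsPellSeq a b r x y (fun i ↦ P i) where
  pell := mod_cast hxy
  zero := mod_cast h0
  one := mod_cast h1
  add_two i := mod_cast hP i

end Integers

/-- For `k ∈ {7,8,10,11,12,13}`, `b = ka` and `c ∈ {c₁⁺, c₂⁺, c₂⁻}`: if `P_l = Q_m` has a
solution `(l, m)` of Type 1 with `m ≥ 3`, then `0 < Λ < 2.6·β^{−2m}`; if it has a solution
of Type 2 with `m ≥ 3`, then `0 < Λ < 1.5·a²·β^{−2m}`, where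
`Λ = l·log α − m·log β + log γ`. -/
theorem linear_form_bound_c1_plus_c2
    (k a r b c s t : ℤ)
    (hk : k ∈ ({7, 8, 10, 11, 12, 13} : Set ℤ)) (ha : 0 < a) (hr : 0 < r)
    (hr2 : k * a ^ 2 + 4 = r ^ 2) (hb : b = k * a)
    (hc : c = a + b + 2 * r ∨ c = (a * b + 4) * (a + b + 2 * r) - 4 * r ∨
          c = (a * b + 4) * (a + b - 2 * r) + 4 * r)
    (hs : 0 < s) (hs2 : a * c + 4 = s ^ 2) (ht : 0 < t) (ht2 : b * c + 4 = t ^ 2)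
    (x₂ y₂ x₀ z₀ : ℤ)
    (hx₂ : x₂ = 2) (hy₂ : y₂ = 2 ∨ y₂ = -2)
    (P Q : ℕ → ℤ)
    (hP0 : P 0 = x₂) (hP1 : 2 * P 1 = r * x₂ + a * y₂)
    (hPrec : ∀ i : ℕ, P (i + 2) = r * P (i + 1) - P i)
    (hQ0 : Q 0 = x₀) (hQ1 : 2 * Q 1 = s * x₀ + a * z₀)
    (hQrec : ∀ i : ℕ, Q (i + 2) = s * Q (i + 1) - Q i)
    (l m : ℕ)
    (α β γ Λ : ℝ)
    (hα : α = ((r : ℝ) + Real.sqrt ((a : ℝ) * (b : ℝ))) / 2)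
    (hβ : β = ((s : ℝ) + Real.sqrt ((a : ℝ) * (c : ℝ))) / 2)
    (hγ : γ = (Real.sqrt (c : ℝ) * ((y₂ : ℝ) * Real.sqrt (a : ℝ) + (x₂ : ℝ) * Real.sqrt (b : ℝ))) /
              (Real.sqrt (b : ℝ) * ((z₀ : ℝ) * Real.sqrt (a : ℝ) + (x₀ : ℝ) * Real.sqrt (c : ℝ))))
    (hΛ : Λ = (l : ℝ) * Real.log α - (m : ℝ) * Real.log β + Real.log γ)
    (hm : 3 ≤ m) (heq : P l = Q m) :
    ((x₀ = 2 ∧ (z₀ = 2 ∨ z₀ = -2)) → 0 < Λ ∧ Λ < 2.6 / β ^ (2 * m)) ∧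
    ((x₀ = r ∧ (z₀ = t ∨ z₀ = -t)) → 0 < Λ ∧ Λ < 1.5 * (a : ℝ) ^ 2 / β ^ (2 * m)) := by
  have hb7 : 7 * a ≤ b := hb ▸ seven_mul_le_of_mem hk ha.le
  have hba : 9 * a ≤ 4 * b := by linarith
  have hab : a * b + 4 = r ^ 2 := by linear_combination a * hb + hr2
  have hr4 := four_le_of_mul_add_four_eq_sq ha hr hb7 hab
  have hcc := add_add_le_of_eq_c1_or_c2 ha hr4 hb7 hab hc
  subst hx₂
  have hP := isPellSeq_intCast (b := b) (by rcases hy₂ with rfl | rfl <;> ring) hP0 hP1 hPrec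
  have bounds (hx₀ : 0 < x₀) (hxr : x₀ ≤ r) (hpell : a * z₀ ^ 2 - c * x₀ ^ 2 = 4 * (a - c)) :=
    linear_form_bound_c1_plus_c2_general (mod_cast ha) (mod_cast hr4) (mod_cast hab)
      (mod_cast hba) (mod_cast hcc) (mod_cast hs) (mod_cast hs2) (mod_cast hx₀) (mod_cast hxr)
      (mod_cast hP) (isPellSeq_intCast hpell hQ0 hQ1 hQrec) hm (mod_cast heq) hα hβ (mod_cast hγ) hΛ
  refine ⟨fun ⟨hx, hz⟩ ↦ ?_, fun ⟨hx, hz⟩ ↦ ?_⟩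
  · obtain ⟨pos, -, lt⟩ := bounds (by linarith) (by linarith)
      (by rcases hz with rfl | rfl <;> rw [hx] <;> ring)
    exact ⟨pos, lt (mod_cast hx)⟩
  · obtain ⟨pos, lt, -⟩ := bounds (by linarith) hx.le
      (by rcases hz with rfl | rfl <;> rw [hx] <;> linear_combination c * hab - a * ht2)
    exact ⟨pos, lt⟩
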